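/- Suppose f, f', ..., f^{(r-1)} are absolutely continuous on [-1,1], f^{(r)} has bounded variation, and U_r = ∫_{-1}^1 |f^{(r+1)}(x)| dx < ∞. Then for all n ≥ r+1, the Chebyshev coefficients satisfy |a_n| ≤ 2U_r / (π · ∏_{j=0}^{r} (n - r + 2j)). -/

import Mathlib

open MeasureTheory Polynomial Polynomial.Chebyshev

lemma ac_of_integral (g h : ℝ → ℝ) (hi : IntervalIntegrable h volume (-1) 1)
    (hg : ∀ x ∈ Set.Icc (-1 : ℝ) 1, g x = g (-1) + ∫ t in (-1 : ℝ)..x, h t) :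
    AbsolutelyContinuousOnInterval g (-1) 1 := by
  have h1 := hi.absolutelyContinuousOnInterval_intervalIntegral (c := -1) (by simp)
  rw [absolutelyContinuousOnInterval_iff] at h1 ⊢
  intro ε hε
  obtain ⟨δ, hδ, H⟩ := h1 ε hε
  refine ⟨δ, hδ, fun E hE hs => ?_⟩
  convert H E hE hs using 1
  refine Finset.sum_congr rfl fun i hi => ?_
  have := hE.1 i hi
  rw [Set.uIcc_of_le (by norm_num)] at this
  rw [hg _ this.1, hg _ this.2, dist_add_left]

noncomputable def Sn (n : ℕ) (x : ℝ) : ℝ := Real.sin (n * Real.arccos x)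

lemma T_arccos (n : ℤ) {x : ℝ} (hx : x ∈ Set.Icc (-1 : ℝ) 1) :
    (T ℝ n).eval x = Real.cos (n * Real.arccos x) := by
  conv_lhs => rw [← Real.cos_arccos hx.1 hx.2]
  rw [T_real_cos]

lemma hasDerivAt_Sn (n : ℕ) {x : ℝ} (hx : x ∈ Set.Ioo (-1 : ℝ) 1) :
    HasDerivAt (Sn n) (-(n * ((T ℝ n).eval x / Real.sqrt (1 - x ^ 2)))) x := by
  have h := ((Real.hasDerivAt_arccos hx.1.ne' hx.2.ne).const_mul (n : ℝ)).sin
  convert! h using 1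
  rw [T_arccos n ⟨hx.1.le, hx.2.le⟩]
  push_cast; ring

lemma intg (g : ℝ → ℝ) (hg : ContinuousOn g (Set.uIcc (-1) 1)) (m : ℤ) :
    IntervalIntegrable (fun x => g x * (T ℝ m).eval x / Real.sqrt (1 - x ^ 2)) volume (-1) 1 := by
  have := intervalIntegrable_sqrt_one_sub_sq_inv.continuousOn_mul
    (hg.mul (T ℝ m).continuous.continuousOn)
  simpa [div_eq_mul_inv] using this

lemma ac_Sn (n : ℕ) : AbsolutelyContinuousOnInterval (Sn n) (-1) 1 := by
  have hi : IntervalIntegrable (fun x => -(n * ((T ℝ n).eval x / Real.sqrt (1 - x ^ 2))))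
      volume (-1) 1 := by
    have := ((intg (fun _ => 1) continuousOn_const n).const_mul (n : ℝ)).neg
    simpa using! this
  refine ac_of_integral _ _ hi fun x hx => ?_
  rw [intervalIntegral.integral_eq_sub_of_hasDerivAt_of_le hx.1 (f := Sn n)]
  · ring
  · unfold Sn; fun_prop
  · intro y hy
    exact hasDerivAt_Sn n ⟨hy.1, hy.2.trans_le hx.2⟩
  · refine hi.mono_set ?_
    rw [Set.uIcc_of_le hx.1, Set.uIcc_of_le (by norm_num)]
    exact Set.Icc_subset_Icc_right hx.2

lemma parts (g : ℝ → ℝ) (hg : AbsolutelyContinuousOnInterval g (-1) 1) (n : ℕ) :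
    n * ∫ x in (-1 : ℝ)..1, g x * (T ℝ n).eval x / Real.sqrt (1 - x ^ 2) =
      ∫ x in (-1 : ℝ)..1, deriv g x * Sn n x := by
  have h := hg.integral_mul_deriv_eq_deriv_mul (ac_Sn n)
  have e1 : Sn n 1 = 0 := by simp [Sn]
  have e2 : Sn n (-1) = 0 := by simp [Sn]
  rw [e1, e2] at h
  have e3 : ∫ x in (-1 : ℝ)..1, g x * deriv (Sn n) x =
      ∫ x in (-1 : ℝ)..1, -(n * (g x * (T ℝ n).eval x / Real.sqrt (1 - x ^ 2))) := by
    apply intervalIntegral.integral_congr_ae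
    filter_upwards [compl_mem_ae_iff.mpr (measure_singleton (1 : ℝ))] with x hx1 hx
    rw [Set.uIoc_of_le (by norm_num)] at hx
    rw [(hasDerivAt_Sn n ⟨hx.1, lt_of_le_of_ne hx.2 hx1⟩).deriv]
    ring
  rw [e3, intervalIntegral.integral_neg, intervalIntegral.integral_const_mul] at h
  linarith

lemma Sn_eq (n : ℕ) {x : ℝ} (hx : x ∈ Set.Ioo (-1 : ℝ) 1) :
    Sn (n + 1) x = ((T ℝ (n : ℕ)).eval x / Real.sqrt (1 - x ^ 2)
      - (T ℝ (n + 2 : ℕ)).eval x / Real.sqrt (1 - x ^ 2)) / 2 := by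
  have hx' := Set.Ioo_subset_Icc_self hx
  have hs : 0 < Real.sqrt (1 - x ^ 2) := Real.sqrt_pos.2 (by nlinarith [hx.1, hx.2])
  rw [T_arccos _ hx', T_arccos _ hx', ← sub_div, Real.cos_sub_cos, ← Real.sin_arccos] at *
  unfold Sn
  have a1 : ((((n:ℕ):ℤ):ℝ) * Real.arccos x + (((n+2:ℕ):ℤ):ℝ) * Real.arccos x) / 2
    = ((n+1:ℕ):ℝ) * Real.arccos x := by push_cast; ring
  have a2 : ((((n:ℕ):ℤ):ℝ) * Real.arccos x - (((n+2:ℕ):ℤ):ℝ) * Real.arccos x) / 2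
    = - Real.arccos x := by push_cast; ring
  rw [a1, a2, Real.sin_neg]
  field_simp

lemma step (g : ℝ → ℝ) (hg : ContinuousOn g (Set.uIcc (-1) 1)) (n : ℕ) :
    ∫ x in (-1 : ℝ)..1, g x * Sn (n + 1) x =
      ((∫ x in (-1 : ℝ)..1, g x * (T ℝ (n : ℕ)).eval x / Real.sqrt (1 - x ^ 2)) -
      ∫ x in (-1 : ℝ)..1, g x * (T ℝ (n + 2 : ℕ)).eval x / Real.sqrt (1 - x ^ 2)) / 2 := by
  rw [← intervalIntegral.integral_sub (intg g hg _) (intg g hg _),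
    ← intervalIntegral.integral_div]
  apply intervalIntegral.integral_congr_ae
  filter_upwards [compl_mem_ae_iff.mpr (measure_singleton (1 : ℝ))] with x hx1 hx
  rw [Set.uIoc_of_le (by norm_num)] at hx
  rw [Sn_eq n ⟨hx.1, lt_of_le_of_ne hx.2 hx1⟩]
  ring

lemma prod_pos' (r n : ℕ) (hn : r + 1 ≤ n) :
    0 < ∏ j ∈ Finset.range (r + 1), ((n : ℝ) - r + 2 * j) := by
  have : (r : ℝ) + 1 ≤ n := by exact_mod_cast hn
  refine Finset.prod_pos fun j _ => ?_
  have : (0:ℝ) ≤ j := by positivity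
  linarith

lemma main_bound (r : ℕ) : ∀ (f : ℝ → ℝ)
    (_ : ∀ k ≤ r, ∀ x ∈ Set.Icc (-1 : ℝ) 1,
      iteratedDeriv k f x = iteratedDeriv k f (-1) + ∫ t in (-1 : ℝ)..x, iteratedDeriv (k + 1) f t)
    (_ : ∀ k ≤ r, IntervalIntegrable (iteratedDeriv (k + 1) f) volume (-1) 1)
    (n : ℕ) (_ : r + 1 ≤ n),
    |∫ x in (-1 : ℝ)..1, f x * (T ℝ n).eval x / Real.sqrt (1 - x ^ 2)| ≤
      (∫ x in (-1 : ℝ)..1, |iteratedDeriv (r + 1) f x|) /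
        (∏ j ∈ Finset.range (r + 1), ((n : ℝ) - r + 2 * j)) := by
  induction r with
  | zero =>
    intro f hac hint n hn
    have h0 := hac 0 le_rfl
    have i0 := hint 0 le_rfl
    simp only [zero_add, iteratedDeriv_zero, iteratedDeriv_one] at h0 i0
    have hn' : (0:ℝ) < n := by exact_mod_cast hn
    have hA := ac_of_integral _ _ i0 h0
    have hp := parts f hA n
    simp only [zero_add, iteratedDeriv_one, Finset.prod_range_one]
    rw [le_div_iff₀ (by simpa using hn')]
    simp only [Nat.cast_zero, sub_zero, mul_zero, add_zero]
    rw [mul_comm, ← abs_of_pos hn', ← abs_mul, hp]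
    refine (intervalIntegral.abs_integral_le_integral_abs (by norm_num)).trans ?_
    refine intervalIntegral.integral_mono_on (by norm_num)
      (i0.mul_continuousOn (ac_Sn n).continuousOn).abs i0.abs fun x _ => ?_
    rw [abs_mul]
    exact mul_le_of_le_one_right (abs_nonneg _) (Real.abs_sin_le_one _)
  | succ r ih =>
    intro f hac hint n hn
    obtain ⟨m, rfl⟩ : ∃ m, n = m + 1 := ⟨n - 1, by omega⟩
    have h0 := hac 0 (by omega)
    have i0 := hint 0 (by omega)
    simp only [zero_add, iteratedDeriv_zero, iteratedDeriv_one] at h0 i0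
    have h1 := hac 1 (by omega)
    have i1 := hint 1 (by omega)
    rw [iteratedDeriv_one] at h1
    have hA := ac_of_integral _ _ i0 h0
    have hB := ac_of_integral _ _ i1 h1
    have hp := parts f hA (m + 1)
    rw [step _ hB.continuousOn] at hp
    have H := ih (deriv f)
      (fun k hk => by simpa only [iteratedDeriv_succ'] using hac (k + 1) (by omega))
      (fun k hk => by simpa only [iteratedDeriv_succ'] using hint (k + 1) (by omega))
    have H1 := H m (by omega)
    have H2 := H (m + 2) (by omega)
    rw [← iteratedDeriv_succ'] at H1 H2
    set U := ∫ x in (-1 : ℝ)..1, |iteratedDeriv (r + 1 + 1) f x|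
    set A := ∫ x in (-1 : ℝ)..1, deriv f x * (T ℝ (m : ℕ)).eval x / Real.sqrt (1 - x ^ 2)
    set B := ∫ x in (-1 : ℝ)..1, deriv f x * (T ℝ (m + 2 : ℕ)).eval x / Real.sqrt (1 - x ^ 2)
    set C := ∫ x in (-1 : ℝ)..1, f x * (T ℝ (m + 1 : ℕ)).eval x / Real.sqrt (1 - x ^ 2)
    have p1 := prod_pos' r m (by omega)
    have p2 := prod_pos' r (m + 2) (by omega)
    have p3 := prod_pos' (r + 1) (m + 1) (by omega)
    have q1 : ∏ j ∈ Finset.range (r + 1 + 1), (((m + 1 : ℕ) : ℝ) - (r + 1 : ℕ) + 2 * j) =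
        (∏ j ∈ Finset.range (r + 1), ((m : ℝ) - r + 2 * j)) * (m + r + 2) := by
      rw [Finset.prod_range_succ]
      congr 1
      · exact Finset.prod_congr rfl fun j _ => by push_cast; ring
      · push_cast; ring
    have q2 : ∏ j ∈ Finset.range (r + 1 + 1), (((m + 1 : ℕ) : ℝ) - (r + 1 : ℕ) + 2 * j) =
        (∏ j ∈ Finset.range (r + 1), (((m + 2 : ℕ) : ℝ) - r + 2 * j)) * (m - r) := by
      rw [Finset.prod_range_succ']
      congr 1
      · exact Finset.prod_congr rfl fun j _ => by push_cast; ring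
      · push_cast; ring
    set P := ∏ j ∈ Finset.range (r + 1 + 1), (((m + 1 : ℕ) : ℝ) - (r + 1 : ℕ) + 2 * j)
    rw [le_div_iff₀ p1] at H1
    rw [le_div_iff₀ p2] at H2
    rw [le_div_iff₀ p3]
    have hm : (r : ℝ) + 1 ≤ m := by exact_mod_cast (by omega : r + 1 ≤ m)
    have K1 : |A| * P ≤ U * (m + r + 2) := by
      rw [q1, ← mul_assoc]; exact mul_le_mul_of_nonneg_right H1 (by positivity)
    have K2 : |B| * P ≤ U * (m - r) := by
      rw [q2, ← mul_assoc]; exact mul_le_mul_of_nonneg_right H2 (by linarith)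
    have hc : (0:ℝ) < (m + 1 : ℕ) := by positivity
    have K3 : ((m + 1 : ℕ) : ℝ) * |C| ≤ (|A| + |B|) / 2 := by
      rw [← abs_of_pos hc, ← abs_mul, hp, abs_div, abs_two]
      gcongr
      exact abs_sub _ _
    have K4 := mul_le_mul_of_nonneg_right K3 p3.le
    refine le_of_mul_le_mul_left (a := ((m + 1 : ℕ) : ℝ)) ?_ hc
    push_cast at K4 ⊢
    linarith

/-- If `f, f', …, f^{(r-1)}` are absolutely continuous on `[-1,1]`, `f^{(r)}` has bounded
variation, and `U_r = ∫_{-1}^1 |f^{(r+1)}| < ∞`, then for all `n ≥ r + 1` the Chebyshev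
coefficients satisfy `|a_n| ≤ 2U_r / (π·∏_{j=0}^{r} (n - r + 2j))`. -/
theorem chebyshev_coeff_bound_Ur (r : ℕ) (f : ℝ → ℝ)
    (hac : ∀ k ≤ r, ∀ x ∈ Set.Icc (-1 : ℝ) 1,
      iteratedDeriv k f x = iteratedDeriv k f (-1) + ∫ t in (-1 : ℝ)..x, iteratedDeriv (k + 1) f t)
    (hint : ∀ k ≤ r, IntervalIntegrable (iteratedDeriv (k + 1) f) volume (-1) 1)
    (hbv : BoundedVariationOn (iteratedDeriv r f) (Set.Icc (-1) 1))
    (n : ℕ) (hn : r + 1 ≤ n) :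
    |(2 / Real.pi) *
        ∫ x in (-1 : ℝ)..1, f x * (T ℝ n).eval x / Real.sqrt (1 - x ^ 2)| ≤
      2 * (∫ x in (-1 : ℝ)..1, |iteratedDeriv (r + 1) f x|) /
        (Real.pi * ∏ j ∈ Finset.range (r + 1), ((n : ℝ) - r + 2 * j)) := by
  have h := main_bound r f hac hint n hn
  have hpi : (0:ℝ) < 2 / Real.pi := by positivity
  rw [abs_mul, abs_of_pos hpi, mul_div_mul_comm]
  exact mul_le_mul_of_nonneg_left h hpi.le
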